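/- Let X be a finite set with n ≥ 4 elements and let p : X → ℝ² be any map placing the elements of X in the Euclidean plane. Then there exists a strict total order σ on X that is not realized as a distance order from any point of the plane; that is, there is no y ∈ ℝ² such that for all a, b ∈ X, σ relates a before b if and only if dist(y, p a) < dist(y, p b). -/

import Mathlib

/-!
Four or more points of the plane admit a nontrivial relation `∑ l i = 0`, `∑ l i • p i = 0`.
Since `dist y (p i) ^ 2` is `‖y‖ ^ 2` plus an affine function of `y`, the weighted sum
`∑ l i * dist y (p i) ^ 2` equals the constant `∑ l i * ‖p i‖ ^ 2` for every `y`, and after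
replacing `l` by `-l` this constant is nonnegative. Order `X` by decreasing `l`, breaking ties
arbitrarily. If `y` realized this order, the squared distances would be strictly smaller where
`l` is larger, so Chebyshev's sum inequality, in its strict form, would make the weighted sum
negative: a contradiction.
-/

/-- An affine relation among at least four points of the plane, with its sign chosen so that
the associated quadratic sum is nonnegative. -/
lemma exists_affine_relation (X : Type*) [Fintype X] (hX : 4 ≤ Fintype.card X)
    (p : X → EuclideanSpace ℝ (Fin 2)) :
    ∃ l : X → ℝ, l ≠ 0 ∧ ∑ i, l i = 0 ∧ ∑ i, l i • p i = 0 ∧ 0 ≤ ∑ i, l i * ‖p i‖ ^ 2 := by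
  let T : (X → ℝ) →ₗ[ℝ] EuclideanSpace ℝ (Fin 2) × ℝ :=
    (Fintype.linearCombination ℝ p).prod (Fintype.linearCombination ℝ (fun _ => (1 : ℝ)))
  have hT : LinearMap.ker T ≠ ⊥ := by
    apply LinearMap.ker_ne_bot_of_finrank_lt
    simp
    omega
  obtain ⟨l, hl, hl0⟩ := Submodule.exists_mem_ne_zero_of_ne_bot hT
  have h : ∑ i, l i • p i = 0 ∧ ∑ i, l i = 0 := by
    simpa [T, Fintype.linearCombination_apply] using hl
  rcases le_total 0 (∑ i, l i * ‖p i‖ ^ 2) with hC | hC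
  · exact ⟨l, hl0, h.2, h.1, hC⟩
  · refine ⟨-l, neg_ne_zero.mpr hl0, ?_, ?_, ?_⟩
    · simp [h.2]
    · simp [h.1]
    · simpa using hC

lemma sum_mul_dist_sq {X : Type*} [Fintype X] (p : X → EuclideanSpace ℝ (Fin 2)) (l : X → ℝ)
    (h0 : ∑ i, l i = 0) (h1 : ∑ i, l i • p i = 0) (y : EuclideanSpace ℝ (Fin 2)) :
    ∑ i, l i * dist y (p i) ^ 2 = ∑ i, l i * ‖p i‖ ^ 2 := by
  have h2 : ∑ i, l i * inner ℝ y (p i) = 0 := by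
    have := congrArg (fun v => inner ℝ y v) h1
    simpa [inner_sum, inner_smul_right] using this
  calc ∑ i, l i * dist y (p i) ^ 2
      = ∑ i, (l i * ‖y‖ ^ 2 - 2 * (l i * inner ℝ y (p i)) + l i * ‖p i‖ ^ 2) := by
        refine Finset.sum_congr rfl fun i _ => ?_
        rw [dist_eq_norm, norm_sub_sq_real]
        ring
    _ = _ := by
        rw [Finset.sum_add_distrib, Finset.sum_sub_distrib, ← Finset.sum_mul, ← Finset.mul_sum,
          h0, h2]
        ring

/-- Strict form of Chebyshev's sum inequality for weights of total `0`. -/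
lemma sum_mul_neg {X : Type*} [Fintype X] (l f : X → ℝ) (hl : l ≠ 0) (h0 : ∑ i, l i = 0)
    (h : ∀ i j, l j < l i → f i < f j) : ∑ i, l i * f i < 0 := by
  have hle : ∀ i j, (l i - l j) * (f i - f j) ≤ 0 := fun i j => by
    rcases lt_trichotomy (l i) (l j) with hij | hij | hij
    · exact (mul_neg_of_neg_of_pos (sub_neg.2 hij) (sub_pos.2 (h _ _ hij))).le
    · simp [hij]
    · exact (mul_neg_of_pos_of_neg (sub_pos.2 hij) (sub_neg.2 (h _ _ hij))).le
  obtain ⟨k, hk⟩ := Function.ne_iff.1 hl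
  obtain ⟨i, -, hi⟩ := Finset.exists_pos_of_sum_zero_of_exists_nonzero l h0
    ⟨k, Finset.mem_univ k, hk⟩
  obtain ⟨j, -, hj⟩ := Finset.exists_pos_of_sum_zero_of_exists_nonzero (fun i => -l i)
    (by simp [h0]) ⟨k, Finset.mem_univ k, neg_ne_zero.2 hk⟩
  have hij : l j < l i := by linarith
  have hneg : ∑ i, ∑ j, (l i - l j) * (f i - f j) < 0 := by
    refine Finset.sum_neg' (fun i _ => Finset.sum_nonpos fun j _ => hle i j)
      ⟨i, Finset.mem_univ i, Finset.sum_neg' (fun j _ => hle i j) ⟨j, Finset.mem_univ j, ?_⟩⟩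
    exact mul_neg_of_pos_of_neg (sub_pos.2 hij) (sub_neg.2 (h _ _ hij))
  have hexp : ∑ i, ∑ j, (l i - l j) * (f i - f j)
      = 2 * (Fintype.card X * ∑ i, l i * f i) := by
    simp only [sub_mul, mul_sub, Finset.sum_sub_distrib, ← Finset.mul_sum, ← Finset.sum_mul, h0]
    simp only [Finset.sum_const, Finset.card_univ, nsmul_eq_mul, zero_mul, mul_zero, sub_zero,
      zero_sub, sub_neg_eq_add, Finset.mul_sum, ← Finset.sum_add_distrib]
    refine Finset.sum_congr rfl fun _ _ => ?_
    ring
  rw [hexp] at hneg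
  by_contra! hcon
  have : (0 : ℝ) ≤ 2 * (Fintype.card X * ∑ i, l i * f i) := by positivity
  linarith

/-- For any placement of a finite set `X` with at least four elements in the Euclidean
plane, some strict total order on `X` is not realized as a distance order from any point
of the plane. -/
theorem exists_unrealized_order
    (X : Type*) [Fintype X] (hX : 4 ≤ Fintype.card X)
    (p : X → EuclideanSpace ℝ (Fin 2)) :
    ∃ σ : X → X → Prop, IsStrictTotalOrder X σ ∧
      ¬ ∃ y : EuclideanSpace ℝ (Fin 2),
          ∀ a b : X, σ a b ↔ dist y (p a) < dist y (p b) := by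
  obtain ⟨l, hl, h0, h1, hC⟩ := exists_affine_relation X hX p
  -- Decreasing `l`, with ties broken by an enumeration of `X`.
  let g : X → ℝ ×ₗ Fin (Fintype.card X) := fun a => toLex (-l a, Fintype.equivFin X a)
  have hg : Function.Injective g := fun a b hab =>
    (Fintype.equivFin X).injective (congrArg (fun z => (ofLex z).2) hab)
  refine ⟨fun a b => g a < g b,
    (RelEmbedding.preimage ⟨g, hg⟩ (· < ·)).isStrictTotalOrder, ?_⟩
  rintro ⟨y, hy⟩
  have hneg := sum_mul_neg l (fun i => dist y (p i) ^ 2) hl h0 fun i j hij => by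
    have : dist y (p i) < dist y (p j) :=
      (hy i j).1 (Prod.Lex.toLex_lt_toLex.2 (Or.inl (neg_lt_neg hij)))
    gcongr
  rw [sum_mul_dist_sq p l h0 h1 y] at hneg
  exact absurd hC (not_le.2 hneg)
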